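/- Let (τ_i)_{1≤i≤σ_n} be independent critical geometric Galton–Watson trees and suppose σ_n = o(√n). Then, conditionally on Σ_{i=1}^{σ_n} |τ_i| = n, the probability that there exists a unique index i with |τ_i| ≥ (1−δ)n tends to 1 as first n → ∞ and then δ ↓ 0; i.e., liminf_{δ↓0} liminf_{n→∞} P(∃! i : |τ_i| ≥ (1−δ)n | Σ|τ_i| = n) = 1. -/

import Mathlib

open scoped ENNReal Classical
open Filter

/-- Finite rooted plane trees. -/
inductive PTree : Type
  | node : List PTree → PTree

mutual
  /-- The number of edges of a plane tree. -/
  def PTree.edges : PTree → ℕ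
    | .node ts => ts.length + PTree.edgesList ts
  /-- The total number of edges of a list of plane trees. -/
  def PTree.edgesList : List PTree → ℕ
    | [] => 0
    | t :: ts => PTree.edges t + PTree.edgesList ts
end

mutual
  /-- The law of the critical geometric Galton–Watson tree: `P(τ = t) = ∏_v 2^{-c(v)-1}`. -/
  noncomputable def gwProb : PTree → ℝ≥0∞
    | .node ts => (2 : ℝ≥0∞)⁻¹ ^ (ts.length + 1) * gwProbList ts
  /-- Product of `gwProb` over a list of trees. -/
  noncomputable def gwProbList : List PTree → ℝ≥0∞
    | [] => 1
    | t :: ts => gwProb t * gwProbList ts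
end

/-- Mass of a forest of `m` independent critical geometric Galton–Watson trees. -/
noncomputable def forestMass {m : ℕ} (f : Fin m → PTree) : ℝ≥0∞ :=
  ∏ i, gwProb (f i)

/-- Conditional probability, given that `σ` independent critical geometric Galton–Watson trees
have `n` edges in total, that there is a unique index `i` with `|τ_i| ≥ (1-δ)n`. -/
noncomputable def condProbUniqueBig (σ n : ℕ) (δ : ℝ) : ℝ≥0∞ :=
  (∑' f : Fin σ → PTree,
      if (∃! i : Fin σ, (1 - δ) * (n : ℝ) ≤ ((f i).edges : ℝ)) ∧ (∑ i, (f i).edges) = n then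
        forestMass f else 0) /
    ∑' f : Fin σ → PTree, if (∑ i, (f i).edges) = n then forestMass f else 0

open PowerSeries in
/-- Coefficients of powers of the Catalan generating function (ballot numbers). -/
noncomputable def catalanPowCoeff (s n : ℕ) : ℕ := coeff n (catalanSeries ^ s)

lemma catalanPowCoeff_zero_succ (n : ℕ) : catalanPowCoeff 0 (n + 1) = 0 := by
  simp [catalanPowCoeff, PowerSeries.coeff_one]

lemma catalanPowCoeff_zero_right (s : ℕ) : catalanPowCoeff s 0 = 1 := by
  simp [catalanPowCoeff]

lemma catalanPowCoeff_one (n : ℕ) : catalanPowCoeff 1 n = catalan n := by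
  simp [catalanPowCoeff]

lemma catalanPowCoeff_succ_succ (s n : ℕ) :
    catalanPowCoeff (s + 1) (n + 1) = catalanPowCoeff s (n + 1) + catalanPowCoeff (s + 2) n := by
  unfold catalanPowCoeff
  have h : PowerSeries.catalanSeries ^ (s + 1) =
      PowerSeries.catalanSeries ^ s + PowerSeries.catalanSeries ^ (s + 2) * PowerSeries.X := by
    calc PowerSeries.catalanSeries ^ (s + 1)
        = PowerSeries.catalanSeries ^ s *
            (PowerSeries.catalanSeries ^ 2 * PowerSeries.X + 1) := by
          rw [PowerSeries.catalanSeries_sq_mul_X_add_one, pow_succ]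
      _ = _ := by ring
  rw [h, map_add, PowerSeries.coeff_succ_mul_X]

lemma catalanPowCoeff_mul_factorial (n : ℕ) : ∀ s : ℕ,
    catalanPowCoeff (s + 1) n * (n.factorial * (n + s + 1).factorial) =
      (s + 1) * (2 * n + s).factorial := by
  induction n with
  | zero => intro s; simp [catalanPowCoeff_zero_right, Nat.factorial_succ]
  | succ n ihn =>
    intro s
    induction s with
    | zero =>
      have h := ihn 1
      rw [catalanPowCoeff_succ_succ, catalanPowCoeff_zero_succ, zero_add, zero_add]
      have e : 2 * (n + 1) + 0 = (2 * n + 1) + 1 := by ring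
      rw [e, Nat.factorial_succ (2 * n + 1), Nat.factorial_succ n]
      linear_combination (n + 1) * h
    | succ s ihs =>
      have h := ihn (s + 2)
      rw [catalanPowCoeff_succ_succ]
      have e1 : 2 * (n + 1) + (s + 1) = (2 * n + s + 2) + 1 := by ring
      have e2 : n + 1 + (s + 1) + 1 = (n + s + 2) + 1 := by ring
      have e3 : n + (s + 2) + 1 = (n + s + 2) + 1 := by ring
      have e4 : 2 * n + (s + 2) = 2 * n + s + 2 := by ring
      have e5 : n + 1 + s + 1 = n + s + 2 := by ring
      have e6 : 2 * (n + 1) + s = 2 * n + s + 2 := by ring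
      rw [e3, e4, Nat.factorial_succ (n + s + 2)] at h
      rw [e5, e6, Nat.factorial_succ n] at ihs
      rw [e1, e2, Nat.factorial_succ (n + s + 2), Nat.factorial_succ (2 * n + s + 2),
        Nat.factorial_succ n]
      linear_combination (n + s + 3) * ihs + (n + 1) * h

lemma catalanPowCoeff_succ_pos (s n : ℕ) : 0 < catalanPowCoeff (s + 1) n := by
  have h := catalanPowCoeff_mul_factorial n s
  have : 0 < (s + 1) * (2 * n + s).factorial := by positivity
  rw [← h] at this
  exact pos_of_mul_pos_left this (Nat.zero_le _)

lemma catalanPowCoeff_succ_le (s n : ℕ) :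
    catalanPowCoeff (s + 1) n ≤ (s + 1) * 2 ^ s * catalan n := by
  induction s with
  | zero => simp [catalanPowCoeff_one]
  | succ s ih =>
    have h1 := catalanPowCoeff_mul_factorial n s
    have h2 := catalanPowCoeff_mul_factorial n (s + 1)
    have e1 : n + (s + 1) + 1 = (n + s + 1) + 1 := by ring
    have e2 : 2 * n + (s + 1) = (2 * n + s) + 1 := by ring
    rw [e1, e2, Nat.factorial_succ (n + s + 1), Nat.factorial_succ (2 * n + s)] at h2
    have key : (s + 1) * (n + s + 2) * catalanPowCoeff (s + 2) n =
        (s + 2) * (2 * n + s + 1) * catalanPowCoeff (s + 1) n := by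
      have hp : 0 < n.factorial * (n + s + 1).factorial := by positivity
      apply Nat.eq_of_mul_eq_mul_right hp
      linear_combination (s + 1) * h2 - (s + 2) * (2 * n + s + 1) * h1
    have hp : 0 < (s + 1) * (n + s + 2) := by positivity
    apply Nat.le_of_mul_le_mul_left _ hp
    rw [key]
    calc (s + 2) * (2 * n + s + 1) * catalanPowCoeff (s + 1) n
        ≤ (s + 2) * (2 * (n + s + 2)) * ((s + 1) * 2 ^ s * catalan n) := by
          gcongr; omega
      _ = _ := by ring

open scoped NNReal

/-- The probability that a critical geometric Galton–Watson tree has `n` edges. -/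
noncomputable def treeProb (n : ℕ) : ℝ≥0 := catalan n / (2 * 4 ^ n)

/-- The probability that `s` independent critical geometric Galton–Watson trees have
`n` edges in total. -/
noncomputable def forestProb (s n : ℕ) : ℝ≥0 := catalanPowCoeff s n / (2 ^ s * 4 ^ n)

/-- The probability that a critical geometric Galton–Watson tree has at least `n` edges. -/
noncomputable def treeTail (n : ℕ) : ℝ≥0 := n.centralBinom / 4 ^ n

lemma forestProb_succ_le (s n : ℕ) : forestProb (s + 1) n ≤ (s + 1) * treeProb n := by
  unfold forestProb treeProb
  have h : (catalanPowCoeff (s + 1) n : ℝ≥0) ≤ (s + 1) * 2 ^ s * catalan n := by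
    exact_mod_cast catalanPowCoeff_succ_le s n
  calc (catalanPowCoeff (s + 1) n : ℝ≥0) / (2 ^ (s + 1) * 4 ^ n)
      ≤ ((s + 1) * 2 ^ s * catalan n) / (2 ^ (s + 1) * 4 ^ n) := by gcongr
    _ = _ := by rw [pow_succ]; field_simp

lemma forestProb_le {s n : ℕ} (hn : n ≠ 0) : forestProb s n ≤ s * treeProb n := by
  cases s with
  | zero =>
    obtain ⟨m, rfl⟩ := Nat.exists_eq_succ_of_ne_zero hn
    simp [forestProb, catalanPowCoeff_zero_succ]
  | succ s => exact_mod_cast forestProb_succ_le s n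

lemma forestProb_succ_pos (s n : ℕ) : 0 < forestProb (s + 1) n := by
  have := catalanPowCoeff_succ_pos s n
  unfold forestProb
  positivity

lemma treeProb_add_treeTail (n : ℕ) : treeProb n + treeTail (n + 1) = treeTail n := by
  have h1 : ((n : ℝ≥0) + 1) * (n + 1).centralBinom = 2 * (2 * n + 1) * n.centralBinom := by
    exact_mod_cast Nat.succ_mul_centralBinom_succ n
  have h2 : ((n : ℝ≥0) + 1) * catalan n = n.centralBinom := by
    exact_mod_cast succ_mul_catalan_eq_centralBinom n
  have h3 : ((n + 1).centralBinom : ℝ≥0) = 2 * (2 * n + 1) * catalan n := by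
    rw [← h2] at h1
    have : (n : ℝ≥0) + 1 ≠ 0 := by positivity
    apply mul_left_cancel₀ this
    rw [h1]; ring
  unfold treeProb treeTail
  rw [h3, ← h2, pow_succ]
  field_simp
  ring

lemma treeProb_antitone : Antitone treeProb := by
  apply antitone_nat_of_succ_le
  intro n
  have h : catalan (n + 1) ≤ 4 * catalan n := by
    have h1 := Nat.succ_mul_centralBinom_succ n
    rw [← succ_mul_catalan_eq_centralBinom, ← succ_mul_catalan_eq_centralBinom] at h1
    have h2 : (n + 2) * catalan (n + 1) = 2 * (2 * n + 1) * catalan n := by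
      apply Nat.eq_of_mul_eq_mul_left (show 0 < n + 1 by omega)
      linear_combination h1
    apply Nat.le_of_mul_le_mul_left _ (show 0 < n + 2 by omega)
    rw [h2]
    nlinarith [Nat.zero_le (catalan n)]
  have h' : (catalan (n + 1) : ℝ≥0) ≤ 4 * catalan n := by exact_mod_cast h
  unfold treeProb
  calc (catalan (n + 1) : ℝ≥0) / (2 * 4 ^ (n + 1)) ≤ 4 * catalan n / (2 * 4 ^ (n + 1)) := by gcongr
    _ = _ := by rw [pow_succ]; field_simp

lemma treeTail_sq_mul_le (n : ℕ) : treeTail n ^ 2 * (2 * n + 1) ≤ 1 := by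
  induction n with
  | zero => simp [treeTail]
  | succ n ih =>
    have h1 : ((n : ℝ≥0) + 1) * (n + 1).centralBinom = 2 * (2 * n + 1) * n.centralBinom := by
      exact_mod_cast Nat.succ_mul_centralBinom_succ n
    have h : treeTail (n + 1) * (2 * n + 2) = treeTail n * (2 * n + 1) := by
      unfold treeTail
      rw [pow_succ]
      field_simp
      linear_combination 2 * h1
    refine le_trans ?_ ih
    have hp : (0 : ℝ≥0) < (2 * n + 2) ^ 2 := by positivity
    apply le_of_mul_le_mul_right _ hp
    calc treeTail (n + 1) ^ 2 * (2 * (n + 1 : ℕ) + 1) * (2 * n + 2) ^ 2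
        = (treeTail (n + 1) * (2 * n + 2)) ^ 2 * (2 * n + 3) := by push_cast; ring
      _ = treeTail n ^ 2 * (2 * n + 1) * ((2 * n + 1) * (2 * n + 3)) := by rw [h]; ring
      _ ≤ treeTail n ^ 2 * (2 * n + 1) * (2 * n + 2) ^ 2 := by
        gcongr
        norm_cast
        nlinarith

lemma sum_treeProb_add_treeTail (M k : ℕ) :
    ∑ m ∈ Finset.range k, treeProb (M + m) + treeTail (M + k) = treeTail M := by
  induction k with
  | zero => simp
  | succ k ih => rw [Finset.sum_range_succ, add_assoc, ← add_assoc M k 1,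
      treeProb_add_treeTail, ih]

lemma tsum_treeProb_le (M : ℕ) : ∑' m, (treeProb (M + m) : ℝ≥0∞) ≤ treeTail M := by
  apply ENNReal.tsum_le_of_sum_range_le
  intro k
  rw [← sum_treeProb_add_treeTail M k]
  push_cast
  exact le_self_add

lemma treeTail_le_inv_sqrt (n : ℕ) : (treeTail n : ℝ) ≤ 1 / Real.sqrt (2 * n + 1) := by
  have h : (treeTail n : ℝ) ^ 2 * (2 * n + 1) ≤ 1 := by exact_mod_cast treeTail_sq_mul_le n
  have hp : (0 : ℝ) < 2 * n + 1 := by positivity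
  rw [le_div_iff₀ (Real.sqrt_pos.2 hp), ← abs_of_nonneg (NNReal.coe_nonneg (treeTail n)),
    ← Real.sqrt_sq_eq_abs, ← Real.sqrt_mul (sq_nonneg _)]
  exact Real.sqrt_le_one.2 h

lemma one_le_tsum_treeProb : 1 ≤ ∑' m, (treeProb m : ℝ≥0∞) := by
  have hlim : Tendsto treeTail atTop (nhds 0) := by
    rw [← NNReal.tendsto_coe]
    refine squeeze_zero (fun n => NNReal.coe_nonneg _) treeTail_le_inv_sqrt ?_
    have : Tendsto (fun n : ℕ => Real.sqrt (2 * n + 1)) atTop atTop :=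
      Real.tendsto_sqrt_atTop.comp (tendsto_atTop_add_const_right _ _
        (tendsto_natCast_atTop_atTop.const_mul_atTop two_pos))
    exact this.inv_tendsto_atTop.congr fun n => (one_div _).symm
  have hlim' : Tendsto (fun k => ∑' m, (treeProb m : ℝ≥0∞) + treeTail k) atTop
      (nhds (∑' m, (treeProb m : ℝ≥0∞) + (0 : ℝ≥0))) :=
    Tendsto.add tendsto_const_nhds (ENNReal.tendsto_coe.2 hlim)
  rw [ENNReal.coe_zero, add_zero] at hlim'
  refine ge_of_tendsto' hlim' fun k => ?_
  have h := sum_treeProb_add_treeTail 0 k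
  have h0 : treeTail 0 = 1 := by simp [treeTail]
  rw [h0] at h
  have h' : (1 : ℝ≥0∞) = ∑ m ∈ Finset.range k, (treeProb m : ℝ≥0∞) + treeTail k := by
    exact_mod_cast (by simpa using h.symm)
  rw [h']
  gcongr
  exact ENNReal.sum_le_tsum _

/-- The total weight of the elements of size `n`. -/
noncomputable def sizeMass {α : Type*} (e : α → ℕ) (w : α → ℝ≥0∞) (n : ℕ) : ℝ≥0∞ :=
  ∑' x, if e x = n then w x else 0

lemma tsum_sizeMass {α : Type*} (e : α → ℕ) (w : α → ℝ≥0∞) :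
    ∑' n, sizeMass e w n = ∑' x, w x := by
  unfold sizeMass
  rw [ENNReal.tsum_comm]
  refine tsum_congr fun x => ?_
  rw [tsum_eq_single (e x) (fun n hn => if_neg hn.symm), if_pos rfl]

lemma sizeMass_mul_sizeMass {α β : Type*} (e : α → ℕ) (w : α → ℝ≥0∞) (e' : β → ℕ)
    (w' : β → ℝ≥0∞) (i j : ℕ) :
    sizeMass e w i * sizeMass e' w' j =
      ∑' p : α × β, if e p.1 = i ∧ e' p.2 = j then w p.1 * w' p.2 else 0 := by
  unfold sizeMass
  rw [ENNReal.tsum_prod', ← ENNReal.tsum_mul_right]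
  refine tsum_congr fun a => ?_
  rw [← ENNReal.tsum_mul_left]
  refine tsum_congr fun b => ?_
  by_cases h1 : e a = i <;> by_cases h2 : e' b = j <;> simp [h1, h2]

lemma sizeMass_prod {α β : Type*} (e : α → ℕ) (w : α → ℝ≥0∞) (e' : β → ℕ)
    (w' : β → ℝ≥0∞) (n : ℕ) :
    sizeMass (fun p : α × β => e p.1 + e' p.2) (fun p => w p.1 * w' p.2) n =
      ∑ k ∈ Finset.HasAntidiagonal.antidiagonal n, sizeMass e w k.1 * sizeMass e' w' k.2 := by
  simp_rw [sizeMass_mul_sizeMass]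
  rw [← Summable.tsum_finsetSum (fun _ _ => ENNReal.summable)]
  refine tsum_congr fun p => ?_
  split_ifs with h
  · rw [Finset.sum_eq_single (e p.1, e' p.2)]
    · simp
    · rintro ⟨i, j⟩ _ hne
      refine if_neg ?_
      rintro ⟨rfl, rfl⟩
      exact hne rfl
    · intro hn
      exact absurd (Finset.HasAntidiagonal.mem_antidiagonal.2 h) hn
  · symm
    apply Finset.sum_eq_zero
    intro k hk
    refine if_neg fun hh => h ?_
    change e p.1 + e' p.2 = n
    rw [hh.1, hh.2]
    exact Finset.HasAntidiagonal.mem_antidiagonal.1 hk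

/-- Attach a tree as the first child of the root of another tree. -/
def PTree.graft : PTree × PTree → PTree
  | (t, .node ts) => .node (t :: ts)

lemma PTree.graft_injective : Function.Injective PTree.graft := by
  rintro ⟨t, ⟨ts⟩⟩ ⟨t', ⟨ts'⟩⟩ h
  simp only [PTree.graft, PTree.node.injEq, List.cons.injEq] at h
  rw [h.1, h.2]

lemma PTree.edges_graft (p : PTree × PTree) :
    (PTree.graft p).edges = p.1.edges + p.2.edges + 1 := by
  obtain ⟨t, ⟨ts⟩⟩ := p
  simp only [PTree.graft, PTree.edges, PTree.edgesList, List.length_cons]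
  ring

lemma gwProb_graft (p : PTree × PTree) :
    gwProb (PTree.graft p) = 2⁻¹ * (gwProb p.1 * gwProb p.2) := by
  obtain ⟨t, ⟨ts⟩⟩ := p
  simp only [PTree.graft, gwProb, gwProbList, List.length_cons]
  ring

lemma sizeMass_edges_succ (n : ℕ) : sizeMass PTree.edges gwProb (n + 1) =
    2⁻¹ * ∑ k ∈ Finset.HasAntidiagonal.antidiagonal n,
      sizeMass PTree.edges gwProb k.1 * sizeMass PTree.edges gwProb k.2 := by
  rw [← sizeMass_prod]
  unfold sizeMass
  rw [← PTree.graft_injective.tsum_eq, ← ENNReal.tsum_mul_left]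
  · refine tsum_congr fun p => ?_
    simp [PTree.edges_graft, gwProb_graft]
  · rintro ⟨ts⟩ h
    cases ts with
    | nil => simp [PTree.edges, PTree.edgesList] at h
    | cons t ts => exact ⟨(t, .node ts), rfl⟩

lemma sizeMass_edges_zero : sizeMass PTree.edges gwProb 0 = 2⁻¹ := by
  unfold sizeMass
  rw [tsum_eq_single (.node [])]
  · simp [PTree.edges, PTree.edgesList, gwProb, gwProbList]
  · rintro ⟨ts⟩ h
    cases ts with
    | nil => exact absurd rfl h
    | cons t ts => simp [PTree.edges]

lemma treeProb_succ (n : ℕ) : treeProb (n + 1) =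
    2⁻¹ * ∑ k ∈ Finset.HasAntidiagonal.antidiagonal n, treeProb k.1 * treeProb k.2 := by
  have h : ∀ k ∈ Finset.HasAntidiagonal.antidiagonal n, treeProb k.1 * treeProb k.2 =
      (catalan k.1 * catalan k.2 : ℕ) * (4 * 4 ^ n)⁻¹ := by
    intro k hk
    rw [← Finset.HasAntidiagonal.mem_antidiagonal.1 hk, treeProb, treeProb, pow_add]
    push_cast
    field_simp
    ring
  rw [Finset.sum_congr rfl h, ← Finset.sum_mul, ← Nat.cast_sum, ← catalan_succ', treeProb, pow_succ]
  field_simp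

lemma sizeMass_edges (n : ℕ) : sizeMass PTree.edges gwProb n = treeProb n := by
  induction n using Nat.strong_induction_on with
  | _ n ih =>
    cases n with
    | zero => simp [sizeMass_edges_zero, treeProb]
    | succ n =>
      rw [sizeMass_edges_succ, treeProb_succ]
      push_cast
      congr 1
      refine Finset.sum_congr rfl fun k hk => ?_
      have := Finset.HasAntidiagonal.mem_antidiagonal.1 hk
      rw [ih k.1 (by omega), ih k.2 (by omega)]

/-- The total number of edges of a forest. -/
def forestEdges {s : ℕ} (f : Fin s → PTree) : ℕ := ∑ i, (f i).edges

/-- Split off the tree with index `i` from a forest. -/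
def forestEquiv {s : ℕ} (i : Fin (s + 1)) :
    PTree × (Fin s → PTree) ≃ (Fin (s + 1) → PTree) :=
  Fin.insertNthEquiv (fun _ => PTree) i

lemma forestEquiv_apply_self {s : ℕ} (i : Fin (s + 1)) (p : PTree × (Fin s → PTree)) :
    forestEquiv i p i = p.1 := by
  simp [forestEquiv, Fin.insertNthEquiv]

lemma forestEdges_forestEquiv {s : ℕ} (i : Fin (s + 1)) (p : PTree × (Fin s → PTree)) :
    forestEdges (forestEquiv i p) = p.1.edges + forestEdges p.2 := by
  simp [forestEdges, Fin.sum_univ_succAbove _ i, forestEquiv, Fin.insertNthEquiv]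

lemma forestMass_forestEquiv {s : ℕ} (i : Fin (s + 1)) (p : PTree × (Fin s → PTree)) :
    forestMass (forestEquiv i p) = gwProb p.1 * forestMass p.2 := by
  simp [forestMass, Fin.prod_univ_succAbove _ i, forestEquiv, Fin.insertNthEquiv]

lemma forestProb_succ_left (s n : ℕ) : forestProb (s + 1) n =
    ∑ k ∈ Finset.HasAntidiagonal.antidiagonal n, treeProb k.1 * forestProb s k.2 := by
  have h : ∀ k ∈ Finset.HasAntidiagonal.antidiagonal n, treeProb k.1 * forestProb s k.2 =
      (catalan k.1 * catalanPowCoeff s k.2 : ℕ) * (2 ^ (s + 1) * 4 ^ n)⁻¹ := by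
    intro k hk
    rw [← Finset.HasAntidiagonal.mem_antidiagonal.1 hk, treeProb, forestProb, pow_add, pow_succ]
    push_cast
    field_simp
    ring
  rw [Finset.sum_congr rfl h, ← Finset.sum_mul, ← Nat.cast_sum, forestProb, div_eq_mul_inv]
  congr 2
  rw [catalanPowCoeff, pow_succ', PowerSeries.coeff_mul]
  simp [catalanPowCoeff]

lemma sizeMass_forestEdges (s n : ℕ) :
    sizeMass (forestEdges (s := s)) forestMass n = forestProb s n := by
  induction s generalizing n with
  | zero =>
    unfold sizeMass
    rw [tsum_fintype]
    cases n with
    | zero => simp [forestEdges, forestMass, forestProb, catalanPowCoeff_zero_right]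
    | succ n => simp [forestEdges, forestProb, catalanPowCoeff_zero_succ]
  | succ s ih =>
    have h : sizeMass (forestEdges (s := s + 1)) forestMass n =
        sizeMass (fun p : PTree × (Fin s → PTree) => p.1.edges + forestEdges p.2)
          (fun p => gwProb p.1 * forestMass p.2) n := by
      unfold sizeMass
      rw [← (forestEquiv 0).tsum_eq]
      simp_rw [forestEdges_forestEquiv, forestMass_forestEquiv]
    rw [h, sizeMass_prod, forestProb_succ_left]
    push_cast
    simp_rw [ih, sizeMass_edges]

lemma one_le_tsum_forestMass (s : ℕ) : 1 ≤ ∑' f : Fin s → PTree, forestMass f := by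
  induction s with
  | zero => simp [forestMass]
  | succ s ih =>
    have h1 : 1 ≤ ∑' t, gwProb t := by
      rw [← tsum_sizeMass PTree.edges]
      simp_rw [sizeMass_edges]
      exact one_le_tsum_treeProb
    rw [← (forestEquiv 0).tsum_eq]
    simp_rw [forestMass_forestEquiv]
    rw [ENNReal.tsum_prod']
    simp_rw [ENNReal.tsum_mul_left, ENNReal.tsum_mul_right]
    exact one_le_mul h1 ih

lemma one_le_sum_forestProb_add (s : ℕ) {M : ℕ} (hM : M ≠ 0) :
    1 ≤ ∑ m ∈ Finset.range M, (forestProb s m : ℝ≥0∞) + s * treeTail M := by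
  have h := one_le_tsum_forestMass s
  rw [← tsum_sizeMass forestEdges] at h
  simp_rw [sizeMass_forestEdges] at h
  rw [← Summable.sum_add_tsum_nat_add' (k := M) ENNReal.summable] at h
  refine h.trans ?_
  gcongr
  calc ∑' m, (forestProb s (m + M) : ℝ≥0∞) ≤ ∑' m, (s : ℝ≥0∞) * treeProb (M + m) := by
        refine ENNReal.tsum_le_tsum fun m => ?_
        rw [add_comm]
        exact_mod_cast forestProb_le (s := s) (n := M + m) (by omega)
    _ ≤ s * treeTail M := by
        rw [ENNReal.tsum_mul_left]
        gcongr
        exact tsum_treeProb_le M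

/-- Lower bound for the mass of the forests of total size `n` in which the tree with index `i`
is big. -/
lemma le_tsum_big {s n M : ℕ} {δ : ℝ} (hM : ∀ m < M, m ≤ n ∧ (m : ℝ) ≤ δ * n)
    (i : Fin (s + 1)) :
    (treeProb n : ℝ≥0∞) * ∑ m ∈ Finset.range M, (forestProb s m : ℝ≥0∞) ≤
      ∑' f : Fin (s + 1) → PTree,
        if (1 - δ) * (n : ℝ) ≤ ((f i).edges : ℝ) ∧ forestEdges f = n then forestMass f else 0 := by
  calc (treeProb n : ℝ≥0∞) * ∑ m ∈ Finset.range M, (forestProb s m : ℝ≥0∞)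
      ≤ ∑ m ∈ Finset.range M, (treeProb (n - m) : ℝ≥0∞) * forestProb s m := by
        rw [Finset.mul_sum]
        refine Finset.sum_le_sum fun m _ => ?_
        gcongr
        exact treeProb_antitone (Nat.sub_le n m)
    _ = ∑' p : PTree × (Fin s → PTree), ∑ m ∈ Finset.range M,
          if p.1.edges = n - m ∧ forestEdges p.2 = m then gwProb p.1 * forestMass p.2 else 0 := by
        rw [Summable.tsum_finsetSum (fun _ _ => ENNReal.summable)]
        simp_rw [← sizeMass_edges, ← sizeMass_forestEdges, sizeMass_mul_sizeMass]
    _ ≤ _ := by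
        rw [← (forestEquiv i).tsum_eq]
        simp_rw [forestEquiv_apply_self, forestEdges_forestEquiv, forestMass_forestEquiv]
        refine ENNReal.tsum_le_tsum fun p => ?_
        by_cases hp : forestEdges p.2 < M ∧ p.1.edges = n - forestEdges p.2
        · obtain ⟨hn, hδ⟩ := hM _ hp.1
          rw [Finset.sum_eq_single (forestEdges p.2), if_pos ⟨hp.2, rfl⟩, if_pos]
          · rw [hp.2]
            refine ⟨?_, by omega⟩
            rw [Nat.cast_sub hn]
            linarith
          · intro m _ hm
            exact if_neg fun hh => hm hh.2.symm
          · intro hn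
            exact absurd (Finset.mem_range.2 hp.1) hn
        · rw [Finset.sum_eq_zero]
          · exact zero_le
          · intro m hm
            refine if_neg ?_
            rintro ⟨h1, rfl⟩
            exact hp ⟨Finset.mem_range.1 hm, h1⟩

lemma sum_tsum_big_le {s n : ℕ} {δ : ℝ} (hδ : δ < 1 / 2) (hn : 0 < n) :
    ∑ i : Fin s, (∑' f : Fin s → PTree,
        if (1 - δ) * (n : ℝ) ≤ ((f i).edges : ℝ) ∧ forestEdges f = n then forestMass f else 0) ≤
      ∑' f : Fin s → PTree,
        if (∃! i : Fin s, (1 - δ) * (n : ℝ) ≤ ((f i).edges : ℝ)) ∧ forestEdges f = n then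
          forestMass f else 0 := by
  rw [← Summable.tsum_finsetSum (fun _ _ => ENNReal.summable)]
  refine ENNReal.tsum_le_tsum fun f => ?_
  by_cases h : ∃ i, (1 - δ) * (n : ℝ) ≤ ((f i).edges : ℝ) ∧ forestEdges f = n
  · obtain ⟨i, hi, hf⟩ := h
    have huniq : ∀ j, (1 - δ) * (n : ℝ) ≤ ((f j).edges : ℝ) → j = i := by
      intro j hj
      by_contra hne
      have h1 : (f i).edges + (f j).edges ≤ n := by
        rw [← hf, forestEdges, ← Finset.sum_pair (f := fun k => (f k).edges) (Ne.symm hne)]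
        exact Finset.sum_le_sum_of_subset (Finset.subset_univ _)
      have h2 : ((f i).edges : ℝ) + (f j).edges ≤ n := by exact_mod_cast h1
      have h3 : (0 : ℝ) < n := by exact_mod_cast hn
      nlinarith
    rw [if_pos ⟨⟨i, hi, huniq⟩, hf⟩, Finset.sum_eq_single i, if_pos ⟨hi, hf⟩]
    · intro j _ hj
      exact if_neg fun hh => hj (huniq j hh.1)
    · intro hh
      exact absurd (Finset.mem_univ i) hh
  · push Not at h
    rw [Finset.sum_eq_zero]
    · exact zero_le
    · intro i _
      exact if_neg fun hh => h i hh.1 hh.2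

lemma one_le_condProbUniqueBig_add {s n M : ℕ} {δ : ℝ} (hδ : δ < 1 / 2) (hn : 0 < n)
    (hM0 : M ≠ 0) (hM : ∀ m < M, m ≤ n ∧ (m : ℝ) ≤ δ * n) :
    1 ≤ condProbUniqueBig (s + 1) n δ + s * treeTail M := by
  refine (one_le_sum_forestProb_add s hM0).trans ?_
  gcongr
  have hden : (∑' f : Fin (s + 1) → PTree,
      if (∑ i, (f i).edges) = n then forestMass f else 0) = forestProb (s + 1) n :=
    sizeMass_forestEdges (s + 1) n
  rw [condProbUniqueBig, hden, ENNReal.le_div_iff_mul_le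
    (Or.inl (by exact_mod_cast (forestProb_succ_pos s n).ne')) (Or.inl ENNReal.coe_ne_top)]
  refine le_trans ?_ (sum_tsum_big_le hδ hn)
  calc (∑ m ∈ Finset.range M, (forestProb s m : ℝ≥0∞)) * forestProb (s + 1) n
      ≤ (∑ m ∈ Finset.range M, (forestProb s m : ℝ≥0∞)) * ((s + 1) * treeProb n) := by
        gcongr
        exact_mod_cast forestProb_succ_le s n
    _ = ∑ i : Fin (s + 1),
          (treeProb n : ℝ≥0∞) * ∑ m ∈ Finset.range M, (forestProb s m : ℝ≥0∞) := by
        rw [Finset.sum_const, Finset.card_univ, Fintype.card_fin, nsmul_eq_mul]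
        push_cast
        ring
    _ ≤ _ := Finset.sum_le_sum fun i _ => le_tsum_big hM i

lemma coe_mul_treeTail_le {s n : ℕ} {δ : ℝ} (hδ : 0 < δ) (hn : 0 < n) :
    (s : ℝ) * treeTail (⌊δ * n⌋₊ + 1) ≤ s / Real.sqrt n * (1 / Real.sqrt δ) := by
  have hn' : (0 : ℝ) < n := by exact_mod_cast hn
  have h := treeTail_le_inv_sqrt (⌊δ * n⌋₊ + 1)
  have h2 : Real.sqrt (δ * n) ≤ Real.sqrt (2 * (⌊δ * n⌋₊ + 1 : ℕ) + 1) := by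
    apply Real.sqrt_le_sqrt
    have := Nat.lt_floor_add_one (δ * n)
    have h0 : 0 < δ * n := by positivity
    push_cast
    linarith
  calc (s : ℝ) * treeTail (⌊δ * n⌋₊ + 1)
      ≤ s * (1 / Real.sqrt (δ * n)) := by
        gcongr
        refine h.trans ?_
        gcongr
    _ = _ := by rw [Real.sqrt_mul hδ.le]; field_simp

/-- If `σ_n = o(√n)`, then conditionally on the total size being `n`, with probability tending
to `1` (first `n → ∞`, then `δ ↓ 0`) there is a unique tree of size at least `(1-δ)n`. -/
theorem unique_big_tree (σ : ℕ → ℕ) (hpos : ∀ n, 0 < σ n)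
    (hσ : Tendsto (fun n => (σ n : ℝ) / Real.sqrt n) atTop (nhds 0)) :
    ∀ ε : ℝ≥0∞, 0 < ε → ∃ δ₀ : ℝ, 0 < δ₀ ∧ ∀ δ : ℝ, 0 < δ → δ < δ₀ →
      ∀ᶠ n in atTop, 1 - ε ≤ condProbUniqueBig (σ n) n δ := by
  intro ε hε
  refine ⟨1 / 2, by norm_num, fun δ hδ0 hδ => ?_⟩
  obtain ⟨r, hr0, hrε⟩ := ENNReal.lt_iff_exists_nnreal_btwn.1 hε
  have hr : (0 : ℝ) < r := by exact_mod_cast hr0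
  have hlim := hσ.mul_const (1 / Real.sqrt δ)
  rw [zero_mul] at hlim
  filter_upwards [hlim.eventually_lt_const hr, eventually_gt_atTop 0] with n hsmall hn
  obtain ⟨s, hs⟩ := Nat.exists_eq_succ_of_ne_zero (hpos n).ne'
  have hn' : (0 : ℝ) < n := by exact_mod_cast hn
  have hM : ∀ m < ⌊δ * n⌋₊ + 1, m ≤ n ∧ (m : ℝ) ≤ δ * n := by
    intro m hm
    have h1 : (m : ℝ) ≤ δ * n :=
      (Nat.le_floor_iff (by positivity)).1 (Nat.lt_succ_iff.1 hm)
    refine ⟨?_, h1⟩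
    have : (m : ℝ) ≤ n := by nlinarith
    exact_mod_cast this
  have key := one_le_condProbUniqueBig_add (s := s) hδ hn (Nat.succ_ne_zero _) hM
  have hbound : (s : ℝ) * treeTail (⌊δ * n⌋₊ + 1) ≤ r := by
    refine le_trans ?_ ((coe_mul_treeTail_le (s := σ n) hδ0 hn).trans hsmall.le)
    gcongr
    rw [hs]
    exact Nat.le_succ s
  have hbound' : (s : ℝ≥0∞) * treeTail (⌊δ * n⌋₊ + 1) ≤ ε := by
    refine le_trans ?_ hrε.le
    exact_mod_cast hbound
  rw [hs, tsub_le_iff_right]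
  exact key.trans (by gcongr)
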